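/- Let P, H_1, ..., H_n be probability measures on a measurable space X with Scheffé sets S_{i,j}, let OPT := min over j of TV(H_j, P) be achieved by H_{i*}, and let sigma >= 0 and B >= 0. Suppose the empirical semi-distances are sigma-accurate, i.e. |ŵ_{i*}(H_j) - w_{i*}(H_j)| <= sigma for all j. Then for any hypothesis Ĥ = H_j with ŵ_{i*}(Ĥ) <= B, it holds that TV(Ĥ, P) <= 2·OPT + B + sigma. In particular, if ŵ_{i*}(Ĥ) <= OPT + sigma'' for some sigma'' >= 0, then TV(Ĥ, P) <= 3·OPT + sigma'' + sigma. -/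

import Mathlib

/-! Two measures of equal mass with densities `f` and `g` are ordered one way on `{f < g}` and the
other way on its complement, so this set attains their total variation distance. Let `A` be the
Scheffé set of `H i` and `H j`. Then `TV(H j, H i) = |H j A - H i A|`, which is at most the
semi-distance `|H j A - P A|` plus `|H i A - P A| ≤ TV(H i, P)`. A triangle inequality through `H i`
adds a second `TV(H i, P)`, and accuracy replaces the semi-distance by its estimate plus `σ`. -/

open MeasureTheory ENNReal

/-- Total variation distance: supremum over measurable sets of the absolute
difference of the masses. -/
noncomputable def tvDist {X : Type*} [MeasurableSpace X]
    (P Q : Measure X) : ℝ :=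
  ⨆ S : {S : Set X // MeasurableSet S}, |(P S.1).toReal - (Q S.1).toReal|

/-- The Scheffé set `S_{i,j}` of the hypotheses with densities `h i`, `h j`. -/
def scheffeSet {X : Type*} {n : ℕ} (h : Fin n → X → ℝ≥0∞) (i j : Fin n) :
    Set X :=
  if i ≤ j then {x | h i x < h j x} else {x | h j x < h i x}

/-- The semi-distance `w_{i*}(H_j) := |H_j(S_{i*,j}) - P(S_{i*,j})|`. -/
noncomputable def semiDist {X : Type*} [MeasurableSpace X] {n : ℕ}
    (h : Fin n → X → ℝ≥0∞) (H : Fin n → Measure X) (P : Measure X)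
    (i j : Fin n) : ℝ :=
  |(H j (scheffeSet h i j)).toReal - (P (scheffeSet h i j)).toReal|

section TotalVariation

variable {X : Type*} [MeasurableSpace X] (P Q R : Measure X)

lemma tvDist_comm : tvDist P Q = tvDist Q P := by
  simp only [tvDist, abs_sub_comm]

variable {P Q} in
lemma tvDist_le {c : ℝ} (hc : ∀ S, MeasurableSet S → |P.real S - Q.real S| ≤ c) :
    tvDist P Q ≤ c :=
  haveI : Nonempty {S : Set X // MeasurableSet S} := ⟨⟨∅, .empty⟩⟩
  ciSup_le fun S => hc S.1 S.2

variable [IsFiniteMeasure P] [IsFiniteMeasure Q] [IsFiniteMeasure R]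

lemma abs_measureReal_sub_le_tvDist {S : Set X} (hS : MeasurableSet S) :
    |P.real S - Q.real S| ≤ tvDist P Q := by
  have hbdd : BddAbove (Set.range fun T : {T : Set X // MeasurableSet T} =>
      |P.real T.1 - Q.real T.1|) := by
    refine ⟨max (P.real Set.univ) (Q.real Set.univ), ?_⟩
    rintro _ ⟨T, rfl⟩
    exact abs_sub_le_of_nonneg_of_le
      measureReal_nonneg (le_max_of_le_left (measureReal_mono (Set.subset_univ _)))
      measureReal_nonneg (le_max_of_le_right (measureReal_mono (Set.subset_univ _)))
  exact le_ciSup hbdd ⟨S, hS⟩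

lemma tvDist_triangle : tvDist P R ≤ tvDist P Q + tvDist Q R :=
  tvDist_le fun S hS => calc
    |P.real S - R.real S| ≤ |P.real S - Q.real S| + |Q.real S - R.real S| := abs_sub_le _ _ _
    _ ≤ tvDist P Q + tvDist Q R :=
      add_le_add (abs_measureReal_sub_le_tvDist P Q hS) (abs_measureReal_sub_le_tvDist Q R hS)

end TotalVariation

section HahnDecomposition

variable {X : Type*} [MeasurableSpace X]

lemma measureReal_le_of_restrict_le {F G : Measure X} [IsFiniteMeasure G] {A S : Set X}
    (hle : F.restrict A ≤ G.restrict A) (hSA : S ⊆ A) : F.real S ≤ G.real S := by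
  refine ENNReal.toReal_mono (measure_ne_top G S) ?_
  rw [← Measure.restrict_eq_self F hSA, ← Measure.restrict_eq_self G hSA]
  exact hle S

lemma measureReal_sub_le_of_isHahnDecomposition {F G : Measure X} [IsFiniteMeasure F]
    [IsFiniteMeasure G] {A S : Set X} (hA : IsHahnDecomposition F G A) (hS : MeasurableSet S) :
    G.real S - F.real S ≤ G.real A - F.real A := by
  have le_on_sdiff : F.real (A \ S) ≤ G.real (A \ S) :=
    measureReal_le_of_restrict_le hA.le_on Set.sdiff_subset
  have ge_on_sdiff : G.real (S \ A) ≤ F.real (S \ A) :=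
    measureReal_le_of_restrict_le hA.ge_on_compl (Set.sdiff_subset_compl S A)
  have split_S (M : Measure X) [IsFiniteMeasure M] : M.real (A ∩ S) + M.real (S \ A) = M.real S :=
    Set.inter_comm S A ▸ measureReal_inter_add_sdiff hA.measurableSet
  have split_A (M : Measure X) [IsFiniteMeasure M] : M.real (A ∩ S) + M.real (A \ S) = M.real A :=
    measureReal_inter_add_sdiff hS
  linarith [split_S F, split_S G, split_A F, split_A G]

lemma tvDist_eq_of_isHahnDecomposition {F G : Measure X} [IsFiniteMeasure F] [IsFiniteMeasure G]
    {A : Set X} (hA : IsHahnDecomposition F G A) (hmass : F Set.univ = G Set.univ) :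
    tvDist F G = |F.real A - G.real A| := by
  refine le_antisymm (tvDist_le fun S hS => ?_) (abs_measureReal_sub_le_tvDist F G hA.measurableSet)
  have upper : G.real S - F.real S ≤ G.real A - F.real A :=
    measureReal_sub_le_of_isHahnDecomposition hA hS
  have lower : F.real S - G.real S ≤ G.real A - F.real A := calc
    F.real S - G.real S ≤ F.real Aᶜ - G.real Aᶜ :=
      measureReal_sub_le_of_isHahnDecomposition hA.compl hS
    _ = G.real A - F.real A := by
      have hmass_real : F.real Set.univ = G.real Set.univ := congrArg ENNReal.toReal hmass
      rw [measureReal_compl hA.measurableSet, measureReal_compl hA.measurableSet, hmass_real]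
      ring
  calc
    |F.real S - G.real S| ≤ G.real A - F.real A := abs_sub_le_iff.2 ⟨lower, upper⟩
    _ ≤ |F.real A - G.real A| := abs_sub_comm (F.real A) _ ▸ le_abs_self _

lemma restrict_withDensity_le_restrict_withDensity (μ : Measure X) {f g : X → ℝ≥0∞} {A : Set X}
    (hA : MeasurableSet A) (hfg : ∀ x ∈ A, f x ≤ g x) :
    (μ.withDensity f).restrict A ≤ (μ.withDensity g).restrict A := by
  rw [restrict_withDensity hA, restrict_withDensity hA]
  exact withDensity_mono (ae_restrict_of_forall_mem hA hfg)

lemma isHahnDecomposition_withDensity_lt (μ : Measure X) {f g : X → ℝ≥0∞} (hf : Measurable f)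
    (hg : Measurable g) :
    IsHahnDecomposition (μ.withDensity f) (μ.withDensity g) {x | f x < g x} where
  measurableSet := measurableSet_lt hf hg
  le_on := restrict_withDensity_le_restrict_withDensity μ (measurableSet_lt hf hg)
    fun _ hx => le_of_lt hx
  ge_on_compl := restrict_withDensity_le_restrict_withDensity μ (measurableSet_lt hf hg).compl
    fun _ hx => le_of_not_gt hx

end HahnDecomposition

section Scheffe

variable {X : Type*} [MeasurableSpace X] {n : ℕ} {h : Fin n → X → ℝ≥0∞}

lemma measurableSet_scheffeSet (hmeas : ∀ i, Measurable (h i)) (i j : Fin n) :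
    MeasurableSet (scheffeSet h i j) := by
  unfold scheffeSet
  split_ifs
  · exact measurableSet_lt (hmeas i) (hmeas j)
  · exact measurableSet_lt (hmeas j) (hmeas i)

variable {μ : Measure X} {H : Fin n → Measure X} [∀ i, IsFiniteMeasure (H i)]

lemma tvDist_eq_abs_measureReal_scheffeSet_sub (hmeas : ∀ i, Measurable (h i))
    (hdens : ∀ i, H i = μ.withDensity (h i)) {i j : Fin n}
    (hmass : H i Set.univ = H j Set.univ) :
    tvDist (H i) (H j) = |(H i).real (scheffeSet h i j) - (H j).real (scheffeSet h i j)| := by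
  have hahn (k l : Fin n) : IsHahnDecomposition (H k) (H l) {x | h k x < h l x} := by
    rw [hdens k, hdens l]
    exact isHahnDecomposition_withDensity_lt μ (hmeas k) (hmeas l)
  unfold scheffeSet
  split_ifs
  · exact tvDist_eq_of_isHahnDecomposition (hahn i j) hmass
  · rw [tvDist_comm, abs_sub_comm]
    exact tvDist_eq_of_isHahnDecomposition (hahn j i) hmass.symm

lemma tvDist_le_semiDist_add_two_mul_tvDist (P : Measure X) [IsFiniteMeasure P]
    (hmeas : ∀ i, Measurable (h i)) (hdens : ∀ i, H i = μ.withDensity (h i)) {i j : Fin n}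
    (hmass : H i Set.univ = H j Set.univ) :
    tvDist (H j) P ≤ semiDist h H P i j + 2 * tvDist (H i) P := by
  set A := scheffeSet h i j
  have tvDist_hypotheses_le : tvDist (H j) (H i) ≤ semiDist h H P i j + tvDist (H i) P := calc
    tvDist (H j) (H i) = |(H j).real A - (H i).real A| := by
      rw [tvDist_comm, abs_sub_comm, tvDist_eq_abs_measureReal_scheffeSet_sub hmeas hdens hmass]
    _ ≤ |(H j).real A - P.real A| + |P.real A - (H i).real A| := abs_sub_le _ _ _
    _ ≤ semiDist h H P i j + tvDist (H i) P := by
      rw [abs_sub_comm (P.real A)]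
      exact add_le_add le_rfl
        (abs_measureReal_sub_le_tvDist (H i) P (measurableSet_scheffeSet hmeas i j))
  linarith [tvDist_triangle (H j) (H i) P]

end Scheffe

theorem low_empirical_semiDist_implies_close_general {X : Type*} [MeasurableSpace X]
    {μ : Measure X} {n : ℕ} {H : Fin n → Measure X} [∀ i, IsFiniteMeasure (H i)]
    (P : Measure X) [IsFiniteMeasure P] {h : Fin n → X → ℝ≥0∞} (hmeas : ∀ i, Measurable (h i))
    (hdens : ∀ i, H i = μ.withDensity (h i)) {i j : Fin n}
    (hmass : H i Set.univ = H j Set.univ) {σ B w : ℝ}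
    (hacc : |w - semiDist h H P i j| ≤ σ) (hw : w ≤ B) :
    tvDist (H j) P ≤ 2 * tvDist (H i) P + B + σ := by
  have semiDist_le : semiDist h H P i j ≤ w + σ := by linarith [(abs_le.1 hacc).1]
  linarith [tvDist_le_semiDist_add_two_mul_tvDist P hmeas hdens hmass]

/-- If the empirical semi-distances against the optimal hypothesis `H_{i*}`
are `σ`-accurate, then any hypothesis `Ĥ = H j` with `ŵ_{i*}(Ĥ) ≤ B`
satisfies `TV(Ĥ, P) ≤ 2·OPT + B + σ`; in particular, if
`ŵ_{i*}(Ĥ) ≤ OPT + σ''` then `TV(Ĥ, P) ≤ 3·OPT + σ'' + σ`. -/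
theorem low_empirical_semiDist_implies_close {X : Type*} [MeasurableSpace X]
    (μ : Measure X) [SigmaFinite μ] {n : ℕ} (hn : 0 < n)
    (H : Fin n → Measure X) [∀ i, IsProbabilityMeasure (H i)]
    (P : Measure X) [IsProbabilityMeasure P]
    (h : Fin n → X → ℝ≥0∞) (hmeas : ∀ i, Measurable (h i))
    (hdens : ∀ i, H i = μ.withDensity (h i))
    (istar : Fin n) (hopt : ∀ j, tvDist (H istar) P ≤ tvDist (H j) P)
    (σ : ℝ) (hσ : 0 ≤ σ) (B : ℝ) (hB : 0 ≤ B)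
    (wEmp : Fin n → ℝ)
    (hacc : ∀ j, |wEmp j - semiDist h H P istar j| ≤ σ) :
    (∀ j : Fin n, wEmp j ≤ B →
      tvDist (H j) P ≤ 2 * tvDist (H istar) P + B + σ) ∧
    (∀ (σ'' : ℝ), 0 ≤ σ'' → ∀ j : Fin n,
      wEmp j ≤ tvDist (H istar) P + σ'' →
      tvDist (H j) P ≤ 3 * tvDist (H istar) P + σ'' + σ) := by
  have close (j : Fin n) {C : ℝ} (hj : wEmp j ≤ C) :
      tvDist (H j) P ≤ 2 * tvDist (H istar) P + C + σ :=
    low_empirical_semiDist_implies_close_general P hmeas hdens (by simp) (hacc j) hj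
  exact ⟨fun j hj => close j hj, fun σ'' _ j hj => by linarith [close j hj]⟩
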